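/- Let P ≥ 1 be an integer, D = P² + 4, λ₁ = (P + √D)/2, λ₂ = (P − √D)/2, and define g(t) = (λ₁ : ℂ)^t + (λ₂ : ℂ)^t and h(t) = ((λ₁ : ℂ)^t − (λ₂ : ℂ)^t)/√D using principal complex powers. Set ψ₁(t) = g(t)² − g(t−1)·g(t+1) and ψ₂(t) = h(t−1)·h(t+1) − h(t)². Then for every real t, ψ₁(t) = (P² + 4) · ψ₂(t). -/

import Mathlib

/-!
Let `u` and `v` be the powers `a ^ z` and `b ^ z`, sampled at `z - 1`, `z`, `z + 1`. Both samples
are geometric, so `u₋ * u₊ = u ^ 2` and `v₋ * v₊ = v ^ 2`. The parallelogram identity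
`(u + v) ^ 2 + (u - v) ^ 2 = 2 * u ^ 2 + 2 * v ^ 2`, together with its bilinear counterpart for
`u₋, v₋` and `u₊, v₊`, then makes the Cassini differences of `u + v` and of `u - v` opposite to each
other. These differences are quadratic, so dividing `u - v` by `√D` accounts for the factor `D`.
-/

theorem cpow_sub_one_mul_cpow_add_one {a : ℂ} (ha : a ≠ 0) (z : ℂ) :
    a ^ (z - 1) * a ^ (z + 1) = (a ^ z) ^ 2 := by
  rw [← Complex.cpow_add _ _ ha, sub_add_add_cancel, Complex.cpow_add _ _ ha, sq]

theorem cpow_add_cpow_sq_sub_mul {a b : ℂ} (ha : a ≠ 0) (hb : b ≠ 0) (z : ℂ) :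
    (a ^ z + b ^ z) ^ 2 - (a ^ (z - 1) + b ^ (z - 1)) * (a ^ (z + 1) + b ^ (z + 1)) =
      (a ^ (z - 1) - b ^ (z - 1)) * (a ^ (z + 1) - b ^ (z + 1)) - (a ^ z - b ^ z) ^ 2 := by
  linear_combination
    -2 * cpow_sub_one_mul_cpow_add_one ha z - 2 * cpow_sub_one_mul_cpow_add_one hb z

theorem psi1_eq_D_mul_psi2_general {a b s : ℂ} (ha : a ≠ 0) (hb : b ≠ 0) (hs : s ≠ 0) (z : ℂ) :
    (a ^ z + b ^ z) ^ 2 - (a ^ (z - 1) + b ^ (z - 1)) * (a ^ (z + 1) + b ^ (z + 1)) =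
      s ^ 2 * ((a ^ (z - 1) - b ^ (z - 1)) / s * ((a ^ (z + 1) - b ^ (z + 1)) / s) -
        ((a ^ z - b ^ z) / s) ^ 2) := by
  rw [cpow_add_cpow_sq_sub_mul ha hb]
  field_simp

theorem add_sqrt_div_two_mul_sub_sqrt_div_two (p : ℝ) {d : ℝ} (hd : 0 ≤ d) :
    (p + √d) / 2 * ((p - √d) / 2) = (p ^ 2 - d) / 4 := by
  linear_combination -Real.sq_sqrt hd / 4

/-- `ψ₁(t) = (P² + 4)·ψ₂(t)`: the P-Lucas helix is `P² + 4` times the P-Fibonacci helix. -/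
theorem psi1_eq_D_mul_psi2 (P : ℤ) (hP : 1 ≤ P) (D : ℝ) (hD : D = (P : ℝ) ^ 2 + 4)
    (lam1 lam2 : ℝ) (hlam1 : lam1 = ((P : ℝ) + Real.sqrt D) / 2)
    (hlam2 : lam2 = ((P : ℝ) - Real.sqrt D) / 2)
    (g h : ℝ → ℂ)
    (hg : ∀ t : ℝ, g t = (lam1 : ℂ) ^ (t : ℂ) + (lam2 : ℂ) ^ (t : ℂ))
    (hh : ∀ t : ℝ, h t = ((lam1 : ℂ) ^ (t : ℂ) - (lam2 : ℂ) ^ (t : ℂ)) / (Real.sqrt D : ℂ))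
    (psi1 psi2 : ℝ → ℂ)
    (hpsi1 : ∀ t : ℝ, psi1 t = g t ^ 2 - g (t - 1) * g (t + 1))
    (hpsi2 : ∀ t : ℝ, psi2 t = h (t - 1) * h (t + 1) - h t ^ 2) :
    ∀ t : ℝ, psi1 t = ((P : ℂ) ^ 2 + 4) * psi2 t := by
  intro t
  have hDpos : 0 < D := by rw [hD]; positivity
  have hprod : lam1 * lam2 = -1 := by
    rw [hlam1, hlam2, add_sqrt_div_two_mul_sub_sqrt_div_two _ hDpos.le, hD]
    ring
  have ⟨hlam1_ne, hlam2_ne⟩ : lam1 ≠ 0 ∧ lam2 ≠ 0 := mul_ne_zero_iff.mp (by simp [hprod])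
  have hsqrt_sq : (√D : ℂ) ^ 2 = (P : ℂ) ^ 2 + 4 := by
    exact_mod_cast (Real.sq_sqrt hDpos.le).trans hD
  simpa only [hpsi1, hpsi2, hg, hh, hsqrt_sq, Complex.ofReal_sub, Complex.ofReal_add,
    Complex.ofReal_one] using
    psi1_eq_D_mul_psi2_general (Complex.ofReal_ne_zero.mpr hlam1_ne)
      (Complex.ofReal_ne_zero.mpr hlam2_ne)
      (Complex.ofReal_ne_zero.mpr (Real.sqrt_pos.mpr hDpos).ne') t
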